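/- Let N ≥ 2 and 1 ≤ m ≤ N-1 be integers and 0 < a < b. For every x = (y,z) ∈ ℝ^{m+1} × ℝ^{N-m-1} with a < |y| and every ξ ∈ ℝ^N with ξ ≠ 0, the derivative of χ at x satisfies 0 < ⟨Dχ(x)[ξ], ξ⟩ ≤ |ξ|². -/

import Mathlib

/-!
Let `t = ‖y‖`. The derivative of a radial field `y ↦ f(‖y‖) y` is symmetric: it acts as
multiplication by `f t` on the hyperplane orthogonal to `y`, and by `f t + t f' t` on the line
through `y`. For `f = φ` one has `t φ'(t) = s` with `s = (a / t) ^ (m + 1)`, so the two eigenvalues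
are `(1 - s) / (m + 1)` and `(1 - s) / (m + 1) + s`, both in `(0, 1]` because `0 ≤ s < 1`.
On the second factor `Dχ` is the identity.
-/

open scoped RealInnerProductSpace

noncomputable section

/-- `ℝ^k` as a Euclidean space. -/
abbrev E (k : ℕ) : Type := EuclideanSpace ℝ (Fin k)

/-- `φ(t) = (1/(m+1))·[1 - (a/t)^{m+1}]`. -/
def phi (m : ℕ) (a : ℝ) (t : ℝ) : ℝ :=
  (1 / ((m : ℝ) + 1)) * (1 - (a / t) ^ (m + 1))

/-- The vector field `χ(y,z) = (φ(|y|)·y, z)` on `ℝ^{m+1} × ℝ^{N-m-1}`. -/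
def chi (N m : ℕ) (a : ℝ) (x : E (m + 1) × E (N - m - 1)) : E (m + 1) × E (N - m - 1) :=
  (phi m a ‖x.1‖ • x.1, x.2)

section RadialField

variable {F : Type*} [NormedAddCommGroup F] [InnerProductSpace ℝ F]

/-- The radial vector field `y ↦ f(‖y‖) y` with profile `f`, the first component of `χ` when
`f = φ`. -/
def radialField (f : ℝ → ℝ) (y : F) : F :=
  f ‖y‖ • y

theorem hasFDerivAt_norm_of_ne_zero {y : F} (hy : y ≠ 0) :
    HasFDerivAt (‖·‖) (‖y‖⁻¹ • innerSL ℝ y) y := by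
  have h_sqrt := (hasStrictFDerivAt_norm_sq y).hasFDerivAt.sqrt (by positivity)
  simp only [Real.sqrt_sq (norm_nonneg _)] at h_sqrt
  refine h_sqrt.congr_fderiv ?_
  ext η
  simp only [smul_apply, coe_innerSL_apply, nsmul_eq_mul, Nat.cast_ofNat, smul_eq_mul]
  field_simp

variable {f : ℝ → ℝ} {f' : ℝ} {y : F}

theorem hasFDerivAt_radialField (hy : y ≠ 0) (hf : HasDerivAt f f' ‖y‖) :
    HasFDerivAt (radialField f)
      (f ‖y‖ • ContinuousLinearMap.id ℝ F + (f' • ‖y‖⁻¹ • innerSL ℝ y).smulRight y) y :=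
  (hf.comp_hasFDerivAt y (hasFDerivAt_norm_of_ne_zero hy)).smul (hasFDerivAt_id y)

theorem inner_fderiv_radialField_self (hy : y ≠ 0) (hf : HasDerivAt f f' ‖y‖) (η : F) :
    ⟪fderiv ℝ (radialField f) y η, η⟫ = f ‖y‖ * ‖η‖ ^ 2 + f' / ‖y‖ * ⟪y, η⟫ ^ 2 := by
  rw [(hasFDerivAt_radialField hy hf).fderiv]
  simp only [add_apply, smul_apply, ContinuousLinearMap.id_apply,
    ContinuousLinearMap.smulRight_apply, coe_innerSL_apply, smul_eq_mul, inner_add_left,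
    real_inner_smul_left, real_inner_self_eq_norm_sq]
  ring

theorem mul_norm_sq_le_inner_fderiv_radialField (hy : y ≠ 0) (hf : HasDerivAt f f' ‖y‖)
    (hf' : 0 ≤ f') (η : F) :
    f ‖y‖ * ‖η‖ ^ 2 ≤ ⟪fderiv ℝ (radialField f) y η, η⟫ := by
  rw [inner_fderiv_radialField_self hy hf]
  exact le_add_of_nonneg_right (by positivity)

theorem inner_fderiv_radialField_le_mul_norm_sq (hy : y ≠ 0) (hf : HasDerivAt f f' ‖y‖)
    (hf' : 0 ≤ f') (η : F) :
    ⟪fderiv ℝ (radialField f) y η, η⟫ ≤ (f ‖y‖ + ‖y‖ * f') * ‖η‖ ^ 2 := by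
  have cauchy_schwarz : ⟪y, η⟫ ^ 2 ≤ (‖y‖ * ‖η‖) ^ 2 :=
    sq_le_sq.mpr ((abs_real_inner_le_norm y η).trans (le_abs_self _))
  calc ⟪fderiv ℝ (radialField f) y η, η⟫
      = f ‖y‖ * ‖η‖ ^ 2 + f' / ‖y‖ * ⟪y, η⟫ ^ 2 := inner_fderiv_radialField_self hy hf η
    _ ≤ f ‖y‖ * ‖η‖ ^ 2 + f' / ‖y‖ * (‖y‖ * ‖η‖) ^ 2 := by gcongr
    _ = (f ‖y‖ + ‖y‖ * f') * ‖η‖ ^ 2 := by field_simp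

end RadialField

section Phi

variable {a t : ℝ}

theorem hasDerivAt_phi (m : ℕ) (a : ℝ) (ht : t ≠ 0) :
    HasDerivAt (phi m a) ((a / t) ^ (m + 1) / t) t := by
  have h_div : HasDerivAt (fun r ↦ a / r) (a * -(t ^ 2)⁻¹) t := (hasDerivAt_inv ht).const_mul a
  refine (((h_div.pow (m + 1)).const_sub 1).const_mul (1 / ((m : ℝ) + 1))).congr_deriv ?_
  push_cast
  rw [pow_succ (a / t)]
  field_simp

theorem phi_pos (m : ℕ) (ha : 0 ≤ a) (hat : a < t) : 0 < phi m a t := by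
  have ht : 0 < t := ha.trans_lt hat
  have h_pow : (a / t) ^ (m + 1) < 1 :=
    pow_lt_one₀ (by positivity) ((div_lt_one ht).mpr hat) m.succ_ne_zero
  exact mul_pos (by positivity) (sub_pos.mpr h_pow)

theorem phi_add_div_pow_le_one (m : ℕ) (ha : 0 ≤ a) (hat : a ≤ t) :
    phi m a t + (a / t) ^ (m + 1) ≤ 1 := by
  have ht : 0 ≤ t := ha.trans hat
  have h_pow : (a / t) ^ (m + 1) ≤ 1 := pow_le_one₀ (by positivity) (div_le_one_of_le₀ hat ht)
  have h_coeff : 1 / ((m : ℝ) + 1) ≤ 1 := div_le_one_of_le₀ (by simp) (by positivity)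
  have h_phi : phi m a t ≤ 1 - (a / t) ^ (m + 1) :=
    mul_le_of_le_one_left (sub_nonneg.mpr h_pow) h_coeff
  linarith

end Phi

section PhiField

variable {F : Type*} [NormedAddCommGroup F] [InnerProductSpace ℝ F] {a : ℝ} {y : F}

theorem inner_fderiv_radialField_phi_pos (m : ℕ) (ha : 0 ≤ a) (hy : a < ‖y‖) {η : F}
    (hη : η ≠ 0) : 0 < ⟪fderiv ℝ (radialField (phi m a)) y η, η⟫ := by
  have ht : 0 < ‖y‖ := ha.trans_lt hy
  calc 0 < phi m a ‖y‖ * ‖η‖ ^ 2 := mul_pos (phi_pos m ha hy) (by positivity)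
    _ ≤ ⟪fderiv ℝ (radialField (phi m a)) y η, η⟫ :=
      mul_norm_sq_le_inner_fderiv_radialField (norm_pos_iff.mp ht) (hasDerivAt_phi m a ht.ne')
        (by positivity) η

theorem inner_fderiv_radialField_phi_le_norm_sq (m : ℕ) (ha : 0 ≤ a) (hy : a < ‖y‖) (η : F) :
    ⟪fderiv ℝ (radialField (phi m a)) y η, η⟫ ≤ ‖η‖ ^ 2 := by
  have ht : 0 < ‖y‖ := ha.trans_lt hy
  calc ⟪fderiv ℝ (radialField (phi m a)) y η, η⟫
      ≤ (phi m a ‖y‖ + ‖y‖ * ((a / ‖y‖) ^ (m + 1) / ‖y‖)) * ‖η‖ ^ 2 :=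
        inner_fderiv_radialField_le_mul_norm_sq (norm_pos_iff.mp ht) (hasDerivAt_phi m a ht.ne')
          (by positivity) η
    _ = (phi m a ‖y‖ + (a / ‖y‖) ^ (m + 1)) * ‖η‖ ^ 2 := by rw [mul_div_cancel₀ _ ht.ne']
    _ ≤ ‖η‖ ^ 2 := mul_le_of_le_one_left (sq_nonneg _) (phi_add_div_pow_le_one m ha hy.le)

end PhiField

theorem fderiv_prodMap_id_apply {𝕜 F F' G : Type*} [NontriviallyNormedField 𝕜]
    [NormedAddCommGroup F] [NormedSpace 𝕜 F] [NormedAddCommGroup F'] [NormedSpace 𝕜 F']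
    [NormedAddCommGroup G] [NormedSpace 𝕜 G] {g : F → F'} {x : F × G}
    (hg : DifferentiableAt 𝕜 g x.1) (ξ : F × G) :
    fderiv 𝕜 (Prod.map g id) x ξ = (fderiv 𝕜 g x.1 ξ.1, ξ.2) := by
  rw [(hg.hasFDerivAt.prodMap x (hasFDerivAt_id x.2)).fderiv]
  rfl

theorem chi_quadratic_form_general {F G : Type*}
    [NormedAddCommGroup F] [InnerProductSpace ℝ F] [NormedAddCommGroup G] [InnerProductSpace ℝ G]
    (m : ℕ) {a : ℝ} (ha : 0 ≤ a) {x : F × G} (hx : a < ‖x.1‖) {ξ : F × G} (hξ : ξ ≠ 0) :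
    0 < ⟪(fderiv ℝ (Prod.map (radialField (phi m a)) id) x ξ).1, ξ.1⟫
        + ⟪(fderiv ℝ (Prod.map (radialField (phi m a)) id) x ξ).2, ξ.2⟫ ∧
      ⟪(fderiv ℝ (Prod.map (radialField (phi m a)) id) x ξ).1, ξ.1⟫
        + ⟪(fderiv ℝ (Prod.map (radialField (phi m a)) id) x ξ).2, ξ.2⟫
        ≤ ‖ξ.1‖ ^ 2 + ‖ξ.2‖ ^ 2 := by
  have ht : 0 < ‖x.1‖ := ha.trans_lt hx
  have h_diff : DifferentiableAt ℝ (radialField (phi m a)) x.1 :=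
    (hasFDerivAt_radialField (norm_pos_iff.mp ht) (hasDerivAt_phi m a ht.ne')).differentiableAt
  have h_le := inner_fderiv_radialField_phi_le_norm_sq m ha hx ξ.1
  rw [fderiv_prodMap_id_apply h_diff, real_inner_self_eq_norm_sq]
  refine ⟨?_, add_le_add_left h_le _⟩
  by_cases hη : ξ.1 = 0
  · have hζ : ξ.2 ≠ 0 := fun hζ ↦ hξ (Prod.ext hη hζ)
    simpa [hη, sq_pos_iff] using hζ
  · exact add_pos_of_pos_of_nonneg (inner_fderiv_radialField_phi_pos m ha hx hη) (sq_nonneg _)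

theorem chi_eq_prodMap_radialField (N m : ℕ) (a : ℝ) :
    chi N m a = Prod.map (radialField (phi m a)) id :=
  rfl

/-- For `a < |y|` and `ξ ≠ 0`, the quadratic form of `Dχ(x)` satisfies
`0 < ⟨Dχ(x)[ξ], ξ⟩ ≤ |ξ|²` (the Euclidean inner product and norm of
`ℝ^{m+1} × ℝ^{N-m-1}` are written in components). -/
theorem chi_quadratic_form (N m : ℕ) (hN : 2 ≤ N) (hm : 1 ≤ m) (hmN : m ≤ N - 1)
    (a b : ℝ) (ha : 0 < a) (hab : a < b) :
    ∀ x : E (m + 1) × E (N - m - 1), a < ‖x.1‖ →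
      ∀ ξ : E (m + 1) × E (N - m - 1), ξ ≠ 0 →
        0 < ⟪(fderiv ℝ (chi N m a) x ξ).1, ξ.1⟫ + ⟪(fderiv ℝ (chi N m a) x ξ).2, ξ.2⟫ ∧
        ⟪(fderiv ℝ (chi N m a) x ξ).1, ξ.1⟫ + ⟪(fderiv ℝ (chi N m a) x ξ).2, ξ.2⟫
          ≤ ‖ξ.1‖ ^ 2 + ‖ξ.2‖ ^ 2 := by
  intro x hx ξ hξ
  simpa only [chi_eq_prodMap_radialField] using chi_quadratic_form_general m ha.le hx hξ
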